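/- Let c > 0, let ψ ∈ W^{2,∞}(𝕋), and let u be a classical solution of the temperature problem for (c,ψ). Then the total temperature on the front equals one: ∫_𝕋 u(ψ(y),y) dy = 1. -/

import Mathlib

/-!
Put `φ_t = (1-t) ψ + t r` with `r < min ψ`, a family of graphs joining the front (`t = 0`) to the
vertical line `x = r` (`t = 1`), and let
`K(t) = ∫₀¹ (c u - uₓ + φ_t' u_y)(φ_t(y), y) dy`
be the flux of the field `c u eₓ - ∇u` through the graph of `φ_t`. For `t > 0` the graph lies inside
`Ω_ψ`, where the equation turns the `t`-derivative of the integrand into the exact derivative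
`d/dy [(r - ψ(y)) u_y(φ_t(y), y)]`, so that `K' = 0` by periodicity (`integral_fluxDensity'_eq_zero`).
As `u` is `C¹` up to the boundary, `K` is continuous at `t = 0`, hence `K(0) = K(1)`
(`flux_front_eq_flux_line`). Only first derivatives of `ψ` enter.

The Neumann condition gives `K(0) = c ∫ u(ψ(y),y) dy - c =: C`. For `U(x) = ∫₀¹ u(x,y) dy` the identity
`K(1) = C` says `c U(r) - U'(r) = C` for every `r < min ψ`. Since `U → 0` at `-∞`, the mean value theorem
on intervals of length one forces `C = 0`, and dividing by `c` gives the claim.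
-/

open MeasureTheory Set Filter
open scoped NNReal

noncomputable section

/-- The open fresh region `Ω_ψ = {(x,y) : x < ψ(y)}`.  Functions on the torus `𝕋 = ℝ/ℤ`
are identified with 1-periodic functions on `ℝ`, so `Ω_ψ ⊆ ℝ × ℝ`. -/
def Omega (ψ : ℝ → ℝ) : Set (ℝ × ℝ) := {p | p.1 < ψ p.2}

/-- The closure of `Ω_ψ`, i.e. `{(x,y) : x ≤ ψ(y)}`. -/
def OmegaCl (ψ : ℝ → ℝ) : Set (ℝ × ℝ) := {p | p.1 ≤ ψ p.2}

/-- Partial derivative in the `x`-direction. -/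
def pdx (u : ℝ × ℝ → ℝ) (p : ℝ × ℝ) : ℝ := fderiv ℝ u p (1, 0)

/-- Partial derivative in the `y`-direction. -/
def pdy (u : ℝ × ℝ → ℝ) (p : ℝ × ℝ) : ℝ := fderiv ℝ u p (0, 1)

/-- Laplacian. -/
def lap (u : ℝ × ℝ → ℝ) (p : ℝ × ℝ) : ℝ := pdx (pdx u) p + pdy (pdy u) p

/-- `ψ ∈ W^{2,∞}(𝕋)`: a 1-periodic `C¹` function with Lipschitz derivative;
its a.e. second derivative is `deriv (deriv ψ)`. -/
structure W2infPer (ψ : ℝ → ℝ) : Prop where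
  periodic : Function.Periodic ψ 1
  contDiff : ContDiff ℝ 1 ψ
  lipDeriv : ∃ L : ℝ≥0, LipschitzWith L (deriv ψ)

/-- A classical solution `u` of the temperature problem for `(c, ψ)`:
1-periodic in `y`, continuous on the closure of `Ω_ψ`, `C²` inside, `C¹` up to the
boundary, with finite energy `∫_{Ω_ψ} (u² + |∇u|²) < ∞` (one period in `y`),
satisfying `c uₓ - Δu = 0` in `Ω_ψ`, the Neumann condition
`∂u/∂ν = c/√(1+ψ'²)` on `{x = ψ(y)}` (where `ν = (1, -ψ')/√(1+ψ'²)`),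
and `u → 0` uniformly in `y` as `x → -∞`. -/
structure IsTempSol (c : ℝ) (ψ : ℝ → ℝ) (u : ℝ × ℝ → ℝ) : Prop where
  periodic : ∀ x y : ℝ, u (x, y + 1) = u (x, y)
  contOn : ContinuousOn u (OmegaCl ψ)
  c2 : ContDiffOn ℝ 2 u (Omega ψ)
  c1 : ContDiffOn ℝ 1 u (OmegaCl ψ)
  pde : ∀ p ∈ Omega ψ, c * pdx u p - lap u p = 0
  bc : ∀ y : ℝ,
    fderivWithin ℝ u (OmegaCl ψ) (ψ y, y) (1, -deriv ψ y) / Real.sqrt (1 + deriv ψ y ^ 2)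
      = c / Real.sqrt (1 + deriv ψ y ^ 2)
  energy : IntegrableOn (fun p => u p ^ 2 + ‖fderiv ℝ u p‖ ^ 2)
      (Omega ψ ∩ {p : ℝ × ℝ | p.2 ∈ Ico (0 : ℝ) 1})
  decay : ∀ ε > 0, ∃ X : ℝ, ∀ p ∈ OmegaCl ψ, p.1 ≤ X → |u p| ≤ ε

/-! ### Calculus preliminaries -/

lemma hasDerivAt_comp_curve {g : ℝ × ℝ → ℝ} {a b : ℝ → ℝ} {a' b' t : ℝ}
    (ha : HasDerivAt a a' t) (hb : HasDerivAt b b' t)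
    (hg : DifferentiableAt ℝ g (a t, b t)) :
    HasDerivAt (fun s => g (a s, b s)) (a' * pdx g (a t, b t) + b' * pdy g (a t, b t)) t := by
  have h := hg.hasFDerivAt.comp_hasDerivAt t (ha.prodMk hb)
  refine h.congr_deriv ?_
  have : ((a', b') : ℝ × ℝ) = a' • ((1, 0) : ℝ × ℝ) + b' • ((0, 1) : ℝ × ℝ) := by simp
  rw [this, map_add, map_smul, map_smul]
  simp [pdx, pdy]

lemma continuousOn_integral_param {k : ℝ → ℝ → ℝ}
    (hk : ContinuousOn (fun p : ℝ × ℝ => k p.1 p.2) (Icc 0 1 ×ˢ Icc 0 1)) :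
    ContinuousOn (fun t => ∫ y in (0:ℝ)..1, k t y) (Icc 0 1) := by
  obtain ⟨B, hB⟩ := (isCompact_Icc.prod isCompact_Icc).exists_bound_of_continuousOn hk
  intro t ht
  have hsub : uIoc (0:ℝ) 1 ⊆ Icc 0 1 := by
    rw [uIoc_of_le zero_le_one]; exact Ioc_subset_Icc_self
  refine intervalIntegral.continuousWithinAt_of_dominated_interval (bound := fun _ => B) ?_ ?_
    intervalIntegrable_const ?_
  · filter_upwards [self_mem_nhdsWithin] with s hs
    have h1 : ContinuousOn (fun y => k s y) (Icc 0 1) :=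
      hk.comp (f := fun y : ℝ => (s, y)) (by fun_prop) (fun y hy => ⟨hs, hy⟩)
    exact (h1.mono hsub).aestronglyMeasurable measurableSet_uIoc
  · filter_upwards [self_mem_nhdsWithin] with s hs
    exact Eventually.of_forall fun y hy => hB (s, y) ⟨hs, hsub hy⟩
  · exact Eventually.of_forall fun y hy =>
      hk.comp (f := fun s : ℝ => (s, y)) (by fun_prop) (fun s hs => ⟨hs, hsub hy⟩) t ht

lemma hasDerivAt_integral_param {I : Set ℝ} (hI : IsOpen I) {k k' : ℝ → ℝ → ℝ}
    (hk : ∀ t ∈ I, ContinuousOn (k t) (Icc 0 1))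
    (hk' : ContinuousOn (fun p : ℝ × ℝ => k' p.1 p.2) (I ×ˢ Icc 0 1))
    (hd : ∀ t ∈ I, ∀ y ∈ Icc (0:ℝ) 1, HasDerivAt (fun s => k s y) (k' t y) t)
    {t : ℝ} (ht : t ∈ I) :
    HasDerivAt (fun s => ∫ y in (0:ℝ)..1, k s y) (∫ y in (0:ℝ)..1, k' t y) t := by
  obtain ⟨δ, hδ, hδI⟩ := Metric.nhds_basis_closedBall.mem_iff.1 (hI.mem_nhds ht)
  obtain ⟨B, hB⟩ := ((isCompact_closedBall t δ).prod
    (isCompact_Icc (a := (0:ℝ)) (b := 1))).exists_bound_of_continuousOn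
    (hk'.mono (prod_mono hδI subset_rfl))
  have hsub : uIoc (0:ℝ) 1 ⊆ Icc 0 1 := by
    rw [uIoc_of_le zero_le_one]; exact Ioc_subset_Icc_self
  refine (intervalIntegral.hasDerivAt_integral_of_dominated_loc_of_deriv_le
    (bound := fun _ => B) (Metric.closedBall_mem_nhds t hδ) ?_ ?_ ?_ ?_
    intervalIntegrable_const ?_).2
  · filter_upwards [hI.mem_nhds ht] with s hs
    exact ((hk s hs).mono hsub).aestronglyMeasurable measurableSet_uIoc
  · exact ContinuousOn.intervalIntegrable (by rw [uIcc_of_le zero_le_one]; exact hk t ht)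
  · have h1 : ContinuousOn (fun y => k' t y) (Icc 0 1) :=
      hk'.comp (f := fun y : ℝ => (t, y)) (by fun_prop) (fun y hy => ⟨ht, hy⟩)
    exact (h1.mono hsub).aestronglyMeasurable measurableSet_uIoc
  · exact Eventually.of_forall fun y hy s hs => hB (s, y) ⟨hs, hsub hy⟩
  · exact Eventually.of_forall fun y hy s hs => hd s (hδI hs) y (hsub hy)

/-! ### The domain and the solution -/

lemma isOpen_Omega {ψ : ℝ → ℝ} (hψ : Continuous ψ) : IsOpen (Omega ψ) :=
  isOpen_lt continuous_fst (hψ.comp continuous_snd)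

/-- The shear `(s, y) ↦ (s + ψ y, y)` straightens `{x ≤ ψ y}` to a half-plane and has an invertible
differential. -/
lemma uniqueDiffOn_OmegaCl {ψ : ℝ → ℝ} (hψ : ContDiff ℝ 1 ψ) : UniqueDiffOn ℝ (OmegaCl ψ) := by
  rintro ⟨x, y⟩ hxy
  have hs : UniqueDiffOn ℝ (Iic (0:ℝ) ×ˢ (univ : Set ℝ)) :=
    (uniqueDiffOn_Iic 0).prod uniqueDiffOn_univ
  have himg : (fun p : ℝ × ℝ => (p.1 + ψ p.2, p.2)) '' (Iic (0:ℝ) ×ˢ univ) = OmegaCl ψ := by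
    ext ⟨a, b⟩
    simp only [OmegaCl, mem_image, mem_prod, mem_Iic, mem_univ, and_true, mem_ofPred_eq]
    constructor
    · rintro ⟨⟨s, z⟩, h, he⟩
      simp only [Prod.mk.injEq] at he
      obtain ⟨rfl, rfl⟩ := he
      dsimp only at h
      linarith
    · intro h
      exact ⟨(a - ψ b, b), by dsimp only; linarith, by simp⟩
  have hd : HasFDerivAt (fun p : ℝ × ℝ => (p.1 + ψ p.2, p.2))
      ((ContinuousLinearMap.fst ℝ ℝ ℝ + (deriv ψ y) • ContinuousLinearMap.snd ℝ ℝ ℝ).prod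
        (ContinuousLinearMap.snd ℝ ℝ ℝ)) (x - ψ y, y) := by
    have h2 : HasFDerivAt (fun p : ℝ × ℝ => ψ p.2)
        ((deriv ψ y) • ContinuousLinearMap.snd ℝ ℝ ℝ) (x - ψ y, y) :=
      HasDerivAt.comp_hasFDerivAt (h₂ := ψ) (x - ψ y, y)
        ((hψ.differentiable one_ne_zero) y).hasDerivAt hasFDerivAt_snd
    exact (hasFDerivAt_fst.add h2).prodMk hasFDerivAt_snd
  have h := hd.hasFDerivWithinAt.uniqueDiffWithinAt
    (hs (x - ψ y, y) ⟨by simpa [OmegaCl] using hxy, mem_univ _⟩)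
    (Function.Surjective.denseRange fun ⟨a, b⟩ => ⟨(a - deriv ψ y * b, b), by simp⟩)
  rw [himg] at h
  simpa using h

lemma fderivWithin_OmegaCl {ψ : ℝ → ℝ} (hψ : Continuous ψ) (u : ℝ × ℝ → ℝ) {p : ℝ × ℝ}
    (hp : p ∈ Omega ψ) : fderivWithin ℝ u (OmegaCl ψ) p = fderiv ℝ u p :=
  fderivWithin_of_mem_nhds
    (mem_of_superset ((isOpen_Omega hψ).mem_nhds hp) fun q (h : q.1 < ψ q.2) => (h.le : q.1 ≤ ψ q.2))

section Solution

variable {c : ℝ} {ψ : ℝ → ℝ} {u : ℝ × ℝ → ℝ}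

lemma contDiffOn_pdx (hψ : W2infPer ψ) (hu : IsTempSol c ψ u) :
    ContDiffOn ℝ 1 (pdx u) (Omega ψ) :=
  (hu.c2.fderiv_of_isOpen (isOpen_Omega hψ.contDiff.continuous)
    (by norm_num [one_add_one_eq_two])).clm_apply contDiffOn_const

lemma contDiffOn_pdy (hψ : W2infPer ψ) (hu : IsTempSol c ψ u) :
    ContDiffOn ℝ 1 (pdy u) (Omega ψ) :=
  (hu.c2.fderiv_of_isOpen (isOpen_Omega hψ.contDiff.continuous)
    (by norm_num [one_add_one_eq_two])).clm_apply contDiffOn_const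

lemma continuousOn_pdx_of_contDiffOn (hψ : W2infPer ψ) {g : ℝ × ℝ → ℝ}
    (hg : ContDiffOn ℝ 1 g (Omega ψ)) : ContinuousOn (pdx g) (Omega ψ) :=
  (hg.continuousOn_fderiv_of_isOpen (isOpen_Omega hψ.contDiff.continuous) le_rfl).clm_apply
    continuousOn_const

lemma continuousOn_pdy_of_contDiffOn (hψ : W2infPer ψ) {g : ℝ × ℝ → ℝ}
    (hg : ContDiffOn ℝ 1 g (Omega ψ)) : ContinuousOn (pdy g) (Omega ψ) :=
  (hg.continuousOn_fderiv_of_isOpen (isOpen_Omega hψ.contDiff.continuous) le_rfl).clm_apply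
    continuousOn_const

lemma differentiableAt_of_mem_Omega (hψ : W2infPer ψ) {g : ℝ × ℝ → ℝ}
    (hg : ContDiffOn ℝ 1 g (Omega ψ)) {p : ℝ × ℝ} (hp : p ∈ Omega ψ) :
    DifferentiableAt ℝ g p :=
  (hg.differentiableOn one_ne_zero).differentiableAt
    ((isOpen_Omega hψ.contDiff.continuous).mem_nhds hp)

lemma pdy_periodic (hu : IsTempSol c ψ u) (x y : ℝ) : pdy u (x, y + 1) = pdy u (x, y) := by
  have h : (fun p : ℝ × ℝ => u (p + (0, 1))) = u := by
    funext ⟨a, b⟩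
    simpa using hu.periodic a b
  have h2 := fderiv_comp_add_right (𝕜 := ℝ) (f := u) (x := (x, y)) ((0, 1) : ℝ × ℝ)
  rw [h] at h2
  simp only [pdy, h2, Prod.mk_add_mk, add_zero]

/-! ### Conservation of the flux along the family of graphs -/

/-- The graph `x = (1-t) ψ(y) + t r`: the front at `t = 0`, the line `x = r` at `t = 1`. -/
def graphFamily (ψ : ℝ → ℝ) (r t y : ℝ) : ℝ := (1 - t) * ψ y + t * r

/-- The flux density of `c u eₓ - ∇u` through the graph `x = graphFamily ψ r t y`, with respect to `dy`.
The derivative is taken within the closed domain, so that the formula also covers `t = 0`. -/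
def fluxDensity (c : ℝ) (ψ : ℝ → ℝ) (u : ℝ × ℝ → ℝ) (r t y : ℝ) : ℝ :=
  c * u (graphFamily ψ r t y, y) -
    fderivWithin ℝ u (OmegaCl ψ) (graphFamily ψ r t y, y) (1, -((1 - t) * deriv ψ y))

/-- The `t`-derivative of `fluxDensity` for `t > 0`, with `c uₓ - uₓₓ` replaced by `u_yy`. -/
def fluxDensity' (ψ : ℝ → ℝ) (u : ℝ × ℝ → ℝ) (r t y : ℝ) : ℝ :=
  -deriv ψ y * pdy u (graphFamily ψ r t y, y) +
    (r - ψ y) * ((1 - t) * deriv ψ y * pdx (pdy u) (graphFamily ψ r t y, y) +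
      pdy (pdy u) (graphFamily ψ r t y, y))

lemma graphFamily_mem_Omega {r t : ℝ} (hr : ∀ y, r < ψ y) (ht : 0 < t) (y : ℝ) :
    (graphFamily ψ r t y, y) ∈ Omega ψ := by
  simp only [Omega, graphFamily, mem_ofPred_eq]
  nlinarith [hr y]

lemma graphFamily_mem_OmegaCl {r t : ℝ} (hr : ∀ y, r < ψ y) (ht : 0 ≤ t) (y : ℝ) :
    (graphFamily ψ r t y, y) ∈ OmegaCl ψ := by
  simp only [OmegaCl, graphFamily, mem_ofPred_eq]
  nlinarith [hr y]

lemma continuous_graphFamily (hψ : W2infPer ψ) (r : ℝ) :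
    Continuous (fun p : ℝ × ℝ => ((graphFamily ψ r p.1 p.2, p.2) : ℝ × ℝ)) := by
  have := hψ.contDiff.continuous
  unfold graphFamily
  fun_prop

lemma hasDerivAt_graphFamily_left (r t y : ℝ) :
    HasDerivAt (fun s => graphFamily ψ r s y) (r - ψ y) t := by
  have h := (((hasDerivAt_id t).const_sub 1).mul_const (ψ y)).add ((hasDerivAt_id t).mul_const r)
  refine h.congr_deriv ?_
  ring

lemma hasDerivAt_graphFamily_right (hψ : W2infPer ψ) (r t y : ℝ) :
    HasDerivAt (graphFamily ψ r t) ((1 - t) * deriv ψ y) y :=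
  (((hψ.contDiff.differentiable one_ne_zero) y).hasDerivAt.const_mul (1 - t)).add_const (t * r)

lemma fluxDensity_of_pos (hψ : W2infPer ψ) {r t : ℝ} (hr : ∀ y, r < ψ y) (ht : 0 < t) (y : ℝ) :
    fluxDensity c ψ u r t y = c * u (graphFamily ψ r t y, y) - pdx u (graphFamily ψ r t y, y) +
      (1 - t) * deriv ψ y * pdy u (graphFamily ψ r t y, y) := by
  unfold fluxDensity
  rw [fderivWithin_OmegaCl hψ.contDiff.continuous u (graphFamily_mem_Omega hr ht y)]
  have : ((1, -((1 - t) * deriv ψ y)) : ℝ × ℝ) =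
      ((1, 0) : ℝ × ℝ) - ((1 - t) * deriv ψ y) • ((0, 1) : ℝ × ℝ) := by simp
  rw [this, map_sub, map_smul]
  simp only [pdx, pdy, smul_eq_mul]
  ring

lemma continuousOn_fluxDensity (hψ : W2infPer ψ) (hu : IsTempSol c ψ u) {r : ℝ}
    (hr : ∀ y, r < ψ y) :
    ContinuousOn (fun p : ℝ × ℝ => fluxDensity c ψ u r p.1 p.2) (Ici 0 ×ˢ univ) := by
  have hmaps : MapsTo (fun p : ℝ × ℝ => ((graphFamily ψ r p.1 p.2, p.2) : ℝ × ℝ))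
      (Ici 0 ×ˢ univ) (OmegaCl ψ) := fun p hp => graphFamily_mem_OmegaCl hr hp.1 p.2
  have hg := (continuous_graphFamily hψ r).continuousOn (s := Ici 0 ×ˢ univ)
  have h1 := hu.contOn.comp hg hmaps
  have h2 := (hu.c1.continuousOn_fderivWithin (uniqueDiffOn_OmegaCl hψ.contDiff) le_rfl).comp
    hg hmaps
  have hd : Continuous (deriv ψ) := hψ.contDiff.continuous_deriv le_rfl
  refine (continuousOn_const.mul h1).sub (h2.clm_apply (Continuous.continuousOn ?_))
  fun_prop

lemma continuousOn_fluxDensity' (hψ : W2infPer ψ) (hu : IsTempSol c ψ u) {r : ℝ}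
    (hr : ∀ y, r < ψ y) :
    ContinuousOn (fun p : ℝ × ℝ => fluxDensity' ψ u r p.1 p.2) (Ioi 0 ×ˢ univ) := by
  have hmaps : MapsTo (fun p : ℝ × ℝ => ((graphFamily ψ r p.1 p.2, p.2) : ℝ × ℝ))
      (Ioi 0 ×ˢ univ) (Omega ψ) := fun p hp => graphFamily_mem_Omega hr hp.1 p.2
  have hg := (continuous_graphFamily hψ r).continuousOn (s := Ioi 0 ×ˢ univ)
  have hy := contDiffOn_pdy hψ hu
  have h1 := hy.continuousOn.comp hg hmaps
  have h2 := (continuousOn_pdx_of_contDiffOn hψ hy).comp hg hmaps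
  have h3 := (continuousOn_pdy_of_contDiffOn hψ hy).comp hg hmaps
  have hd : Continuous (deriv ψ) := hψ.contDiff.continuous_deriv le_rfl
  have hc := hψ.contDiff.continuous
  have a1 : Continuous fun p : ℝ × ℝ => -deriv ψ p.2 := by fun_prop
  have a2 : Continuous fun p : ℝ × ℝ => r - ψ p.2 := by fun_prop
  have a3 : Continuous fun p : ℝ × ℝ => (1 - p.1) * deriv ψ p.2 := by fun_prop
  exact (a1.continuousOn.mul h1).add (a2.continuousOn.mul ((a3.continuousOn.mul h2).add h3))

lemma hasDerivAt_fluxDensity (hψ : W2infPer ψ) (hu : IsTempSol c ψ u) {r t : ℝ}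
    (hr : ∀ y, r < ψ y) (ht : 0 < t) (y : ℝ) :
    HasDerivAt (fun s => fluxDensity c ψ u r s y) (fluxDensity' ψ u r t y) t := by
  have hmem := graphFamily_mem_Omega hr ht y
  have key : ∀ {g : ℝ × ℝ → ℝ}, ContDiffOn ℝ 1 g (Omega ψ) →
      HasDerivAt (fun s => g (graphFamily ψ r s y, y))
        ((r - ψ y) * pdx g (graphFamily ψ r t y, y)) t := fun hg => by
    simpa using hasDerivAt_comp_curve (hasDerivAt_graphFamily_left r t y) (hasDerivAt_const t y)
      (differentiableAt_of_mem_Omega hψ hg hmem)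
  have h0 := key (hu.c2.of_le one_le_two)
  have h1 := key (contDiffOn_pdx hψ hu)
  have h2 := key (contDiffOn_pdy hψ hu)
  have hlin : HasDerivAt (fun s : ℝ => (1 - s) * deriv ψ y) (-1 * deriv ψ y) t :=
    ((hasDerivAt_id t).const_sub 1).mul_const _
  have h := ((h0.const_mul c).sub h1).add (hlin.mul h2)
  have hpde := hu.pde _ hmem
  unfold lap at hpde
  refine (h.congr_of_eventuallyEq ?_).congr_deriv ?_
  · filter_upwards [lt_mem_nhds ht] with s hs
    exact fluxDensity_of_pos hψ hr hs y
  · unfold fluxDensity'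
    linear_combination (r - ψ y) * hpde

/-- The integrand is `d/dy [(r - ψ(y)) u_y(φ_t(y), y)]`, the derivative of a periodic function. -/
lemma integral_fluxDensity'_eq_zero (hψ : W2infPer ψ) (hu : IsTempSol c ψ u) {r t : ℝ}
    (hr : ∀ y, r < ψ y) (ht : 0 < t) :
    ∫ y in (0:ℝ)..1, fluxDensity' ψ u r t y = 0 := by
  have hd : ∀ y ∈ uIcc (0:ℝ) 1, HasDerivAt
      (fun y => (r - ψ y) * pdy u (graphFamily ψ r t y, y)) (fluxDensity' ψ u r t y) y := by
    intro y _
    have h1 := ((hψ.contDiff.differentiable one_ne_zero) y).hasDerivAt.const_sub r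
    have h2 := hasDerivAt_comp_curve (hasDerivAt_graphFamily_right hψ r t y) (hasDerivAt_id y)
      (differentiableAt_of_mem_Omega hψ (contDiffOn_pdy hψ hu) (graphFamily_mem_Omega hr ht y))
    refine (h1.mul h2).congr_deriv ?_
    simp [fluxDensity']
  have hcont : Continuous (fluxDensity' ψ u r t) := by
    rw [← continuousOn_univ]
    exact (continuousOn_fluxDensity' hψ hu hr).comp (f := fun y : ℝ => (t, y)) (by fun_prop)
      (fun y _ => ⟨ht, mem_univ _⟩)
  rw [intervalIntegral.integral_eq_sub_of_hasDerivAt hd (hcont.intervalIntegrable _ _)]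
  have hp : ψ 1 = ψ 0 := by simpa using hψ.periodic 0
  have hq : ∀ x, pdy u (x, 1) = pdy u (x, 0) := fun x => by simpa using pdy_periodic hu x 0
  simp [graphFamily, hp, hq]

lemma flux_front_eq_flux_line (hψ : W2infPer ψ) (hu : IsTempSol c ψ u) {r : ℝ}
    (hr : ∀ y, r < ψ y) :
    ∫ y in (0:ℝ)..1, fluxDensity c ψ u r 0 y = ∫ y in (0:ℝ)..1, fluxDensity c ψ u r 1 y := by
  have hcont := continuousOn_fluxDensity hψ hu hr
  obtain ⟨s, -, hs⟩ := exists_hasDerivAt_eq_slope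
    (fun t => ∫ y in (0:ℝ)..1, fluxDensity c ψ u r t y) (fun _ => 0) zero_lt_one
    (continuousOn_integral_param (hcont.mono (prod_mono Icc_subset_Ici_self (subset_univ _))))
    (fun t ht => by
      refine HasDerivAt.congr_deriv ?_ (integral_fluxDensity'_eq_zero hψ hu hr ht.1)
      refine hasDerivAt_integral_param isOpen_Ioi (fun t ht => ?_)
        ((continuousOn_fluxDensity' hψ hu hr).mono (prod_mono subset_rfl (subset_univ _)))
        (fun t ht y _ => hasDerivAt_fluxDensity hψ hu hr ht y) ht.1
      exact hcont.comp (f := fun y : ℝ => (t, y)) (by fun_prop)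
        (fun y _ => ⟨le_of_lt (mem_Ioi.1 ht), mem_univ _⟩))
  simp only [sub_zero, div_one] at hs
  linarith

/-! ### Evaluation at both ends -/

lemma flux_front (hψ : W2infPer ψ) (hu : IsTempSol c ψ u) (r : ℝ) :
    ∫ y in (0:ℝ)..1, fluxDensity c ψ u r 0 y = c * (∫ y in (0:ℝ)..1, u (ψ y, y)) - c := by
  have hpt : ∀ y, fluxDensity c ψ u r 0 y = c * u (ψ y, y) - c := by
    intro y
    have hpos : Real.sqrt (1 + deriv ψ y ^ 2) ≠ 0 := by positivity
    have h := hu.bc y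
    rw [div_left_inj' hpos] at h
    simp [fluxDensity, graphFamily, h]
  have hcont : Continuous fun y => u (ψ y, y) := by
    rw [← continuousOn_univ]
    have := hψ.contDiff.continuous
    exact hu.contOn.comp (f := fun y : ℝ => (ψ y, y)) (by fun_prop)
      (fun y _ => le_refl (ψ y))
  simp only [hpt]
  rw [intervalIntegral.integral_sub ((hcont.const_mul c).intervalIntegrable _ _)
    intervalIntegrable_const]
  simp

/-- The identity `U' = c U - C` for `U(r) = ∫₀¹ u(r, y) dy`, where `C` is the flux through the front. -/
lemma hasDerivAt_lineAverage (hψ : W2infPer ψ) (hu : IsTempSol c ψ u) {r : ℝ}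
    {m : ℝ} (hm : ∀ y, m ≤ ψ y) (hrm : r < m) :
    HasDerivAt (fun x => ∫ y in (0:ℝ)..1, u (x, y))
      (c * (∫ y in (0:ℝ)..1, u (r, y)) - (c * (∫ y in (0:ℝ)..1, u (ψ y, y)) - c)) r := by
  have hr : ∀ y, r < ψ y := fun y => hrm.trans_le (hm y)
  have hmem : ∀ x ∈ Iio m, ∀ y, (x, y) ∈ Omega ψ := fun x hx y => lt_of_lt_of_le hx (hm y)
  have hc1 : ContDiffOn ℝ 1 u (Omega ψ) := hu.c2.of_le one_le_two
  have hd := hasDerivAt_integral_param (I := Iio m) isOpen_Iio (k := fun x y => u (x, y))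
    (k' := fun x y => pdx u (x, y))
    (fun t ht => hc1.continuousOn.comp (f := fun y : ℝ => (t, y)) (by fun_prop)
      (fun y _ => hmem t ht y))
    ((contDiffOn_pdx hψ hu).continuousOn.mono (fun p hp => hmem p.1 hp.1 p.2))
    (fun t ht y _ => by
      simpa using hasDerivAt_comp_curve (hasDerivAt_id t) (hasDerivAt_const t y)
        (differentiableAt_of_mem_Omega hψ hc1 (hmem t ht y)))
    hrm
  refine hd.congr_deriv ?_
  rw [← flux_front hψ hu r, flux_front_eq_flux_line hψ hu hr]
  have hline : ∀ {g : ℝ × ℝ → ℝ}, ContinuousOn g (Omega ψ) →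
      IntervalIntegrable (fun y => g (r, y)) volume 0 1 := fun hg => by
    refine Continuous.intervalIntegrable ?_ _ _
    rw [← continuousOn_univ]
    exact hg.comp (f := fun y : ℝ => (r, y)) (by fun_prop) (fun y _ => hr y)
  have hpt : ∀ y, fluxDensity c ψ u r 1 y = c * u (r, y) - pdx u (r, y) := fun y => by
    rw [fluxDensity_of_pos hψ hr one_pos]
    simp [graphFamily]
  simp only [hpt]
  rw [intervalIntegral.integral_sub ((hline hc1.continuousOn).const_mul c)
    (hline (contDiffOn_pdx hψ hu).continuousOn)]
  simp

end Solution

/-- **The total temperature on the front equals one:** if `c > 0`, `ψ ∈ W^{2,∞}(𝕋)` and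
`u` is a classical solution of the temperature problem for `(c,ψ)`, then
`∫_𝕋 u(ψ(y),y) dy = 1`. -/
theorem front_temperature_integral_eq_one
    (c : ℝ) (ψ : ℝ → ℝ) (u : ℝ × ℝ → ℝ)
    (hc : 0 < c) (hψ : W2infPer ψ) (hu : IsTempSol c ψ u) :
    ∫ y in Ico (0:ℝ) 1, u (ψ y, y) = 1 := by
  have hbdd := (hψ.periodic.compact_of_continuous one_ne_zero hψ.contDiff.continuous).bddBelow
  obtain ⟨m, hm'⟩ := hbdd
  have hm : ∀ y, m ≤ ψ y := fun y => hm' (mem_range_self y)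
  rw [integral_Ico_eq_integral_Ioc, ← intervalIntegral.integral_of_le zero_le_one]
  set C := c * (∫ y in (0:ℝ)..1, u (ψ y, y)) - c with hC
  have hbound : ∀ ε > 0, |C| ≤ (2 + c) * ε := by
    intro ε hε
    obtain ⟨X, hX⟩ := hu.decay ε hε
    have hU : ∀ x, x ≤ X → x < m → |∫ y in (0:ℝ)..1, u (x, y)| ≤ ε := by
      intro x hxX hxm
      have h := intervalIntegral.norm_integral_le_of_norm_le_const (a := (0:ℝ)) (b := 1)
        (f := fun y => u (x, y)) (C := ε) (fun y _ => hX (x, y) (hxm.le.trans (hm y)) hxX)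
      simpa using h
    have hX0 : min X m ≤ X := min_le_left _ _
    have hm0 : min X m ≤ m := min_le_right _ _
    -- The interval `[a, a + 1]` lies in the region where `U` is differentiable and small.
    set a := min X m - 2 with ha
    have hder : ∀ x ∈ Icc a (a + 1), HasDerivAt (fun x => ∫ y in (0:ℝ)..1, u (x, y))
        (c * (∫ y in (0:ℝ)..1, u (x, y)) - C) x := fun x hx =>
      hasDerivAt_lineAverage hψ hu hm (by linarith [hx.2])
    obtain ⟨ξ, hξ, he⟩ := exists_hasDerivAt_eq_slope _ _ (lt_add_one a)
      (fun x hx => (hder x hx).continuousAt.continuousWithinAt)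
      (fun x hx => hder x (Ioo_subset_Icc_self hx))
    have e1 := abs_le.1 (hU ξ (by linarith [hξ.2]) (by linarith [hξ.2]))
    have e2 := abs_le.1 (hU a (by linarith) (by linarith))
    have e3 := abs_le.1 (hU (a + 1) (by linarith) (by linarith))
    rw [add_sub_cancel_left, div_one] at he
    rw [abs_le]
    constructor <;> nlinarith
  have hC0 : C = 0 := by
    by_contra hne
    have hpos := abs_pos.2 hne
    have h := hbound (|C| / (2 * (2 + c))) (by positivity)
    have h2 : (2 + c) * (|C| / (2 * (2 + c))) = |C| / 2 := by field_simp
    linarith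
  have : c * ((∫ y in (0:ℝ)..1, u (ψ y, y)) - 1) = 0 := by linarith
  rcases mul_eq_zero.1 this with h | h
  · exact absurd h hc.ne'
  · linarith
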